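/- Let s ∈ ℂ with 0 < Re(s) < 1. Then the principal value integral p.v. ∫_0^∞ t^{s-1}/(1-t) dt converges and equals π·cot(π s). -/

import Mathlib

open MeasureTheory Filter

/-- The symmetrised kernel. -/
noncomputable def pvG (s : ℂ) (t : ℝ) : ℂ :=
  ((t:ℂ) ^ (s - 1) - (t:ℂ) ^ (-s)) / (1 - (t:ℂ))

lemma pv_one_sub_ne {t : ℝ} (ht : t ≠ 1) : (1 - (t:ℂ)) ≠ 0 := by
  rw [sub_ne_zero]; exact_mod_cast ht.symm

lemma pv_cont (r : ℂ) : ContinuousOn (fun t : ℝ => (t:ℂ) ^ r) (Set.Ioi 0) := fun t ht =>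
  (Complex.continuousAt_ofReal_cpow_const _ _ (Or.inr (ne_of_gt ht))).continuousWithinAt

lemma pv_int_cpow_div (r : ℂ) (hr : -1 < r.re) (c : ℝ) (hc0 : 0 ≤ c) (hc : c < 1) :
    IntervalIntegrable (fun t : ℝ => (t:ℂ) ^ r / (1 - (t:ℂ))) volume 0 c := by
  simp_rw [div_eq_mul_inv]
  apply (intervalIntegral.intervalIntegrable_cpow' hr).mul_continuousOn
  rw [Set.uIcc_of_le hc0]
  apply ContinuousOn.inv₀ (by fun_prop)
  intro t ht
  exact pv_one_sub_ne (by have := ht.2; linarith)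

lemma pv_hdiff (r : ℂ) : DifferentiableAt ℝ (fun t : ℝ => (t:ℂ) ^ r) 1 := by
  have h := (HasDerivAt.cpow_const (c := r) (f := fun z : ℂ => z) (x := ((1:ℝ):ℂ)) (f' := 1)
    (hasDerivAt_id _) (by simp)).comp_ofReal
  exact h.differentiableAt

lemma pv_G_int (s : ℂ) (hs0 : 0 < s.re) (hs1 : s.re < 1) :
    IntervalIntegrable (pvG s) volume 0 1 := by
  have h1 : IntervalIntegrable (pvG s) volume 0 (1/2) := by
    have a := pv_int_cpow_div (s-1) (by simp; linarith) (1/2) (by norm_num) (by norm_num)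
    have b := pv_int_cpow_div (-s) (by simp; linarith) (1/2) (by norm_num) (by norm_num)
    refine (a.sub b).congr ?_
    intro t _
    simp [pvG, sub_div]
  have h2 : IntervalIntegrable (pvG s) volume (1/2) 1 := by
    set h : ℝ → ℂ := fun t => (t:ℂ) ^ (s - 1) - (t:ℂ) ^ (-s) with hh
    have hc : ContinuousOn (dslope h 1) (Set.Ioi 0) := by
      rw [continuousOn_dslope (Ioi_mem_nhds one_pos)]
      exact ⟨(pv_cont _).sub (pv_cont _), (pv_hdiff _).sub (pv_hdiff _)⟩
    have hi : IntervalIntegrable (fun t => - dslope h 1 t) volume (1/2) 1 := by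
      apply ContinuousOn.intervalIntegrable
      apply (hc.mono _).neg
      rw [Set.uIcc_of_le (by norm_num)]
      intro t ht
      have := ht.1
      simp only [Set.mem_Ioi]; linarith
    refine hi.congr_uIoo ?_
    rw [Set.uIoo_of_le (by norm_num)]
    intro t ht
    have ht1 : t ≠ 1 := ne_of_lt ht.2
    have h3 := pv_one_sub_ne ht1
    have h4 : ((t:ℂ) - 1) ≠ 0 := by rw [← neg_sub]; exact neg_ne_zero.mpr h3
    simp only [dslope_of_ne _ ht1, slope, vsub_eq_sub, pvG, hh]
    simp only [Complex.ofReal_one, Complex.one_cpow, sub_self, sub_zero, Complex.real_smul,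
      Complex.ofReal_inv, Complex.ofReal_sub]
    rw [← neg_sub (t:ℂ) 1, div_neg]
    congr 1
    field_simp
  exact h1.trans h2

lemma pv_term (n : ℕ) (r : ℂ) (hr : -1 < r.re) :
    IntervalIntegrable (fun t : ℝ => (t:ℂ) ^ n * (t:ℂ) ^ r) volume 0 1 ∧
    ∫ t in (0:ℝ)..1, (t:ℂ) ^ n * (t:ℂ) ^ r = 1 / (n + r + 1) := by
  constructor
  · exact (intervalIntegral.intervalIntegrable_cpow' hr).continuousOn_mul (by fun_prop)
  · have hre : -1 < ((n:ℂ) + r).re := by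
      simp only [Complex.add_re, Complex.natCast_re]
      have : (0:ℝ) ≤ n := n.cast_nonneg
      linarith
    have : ∫ t in (0:ℝ)..1, (t:ℂ) ^ n * (t:ℂ) ^ r = ∫ t in (0:ℝ)..1, (t:ℂ) ^ ((n:ℂ) + r) := by
      apply intervalIntegral.integral_congr_Ioo_of_le zero_le_one
      intro t ht
      have : (t:ℂ) ≠ 0 := by exact_mod_cast ht.1.ne'
      simp only [Complex.cpow_add _ _ this, Complex.cpow_natCast]
    rw [this, integral_cpow (Or.inl hre)]
    have hne : (n:ℂ) + r + 1 ≠ 0 := by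
      intro h
      have := congrArg Complex.re h
      simp only [Complex.add_re, Complex.one_re, Complex.zero_re] at this hre
      linarith
    simp [Complex.zero_cpow hne]

lemma pv_partial (s : ℂ) (hs0 : 0 < s.re) (hs1 : s.re < 1) (N : ℕ) :
    ∫ t in (0:ℝ)..1, (1 - (t:ℂ) ^ N) * pvG s t =
      ∑ n ∈ Finset.range N, (1 / ((n:ℂ) + s) - 1 / ((n:ℂ) + 1 - s)) := by
  have e : ∀ n : ℕ, ∫ t in (0:ℝ)..1, ((t:ℂ) ^ n * (t:ℂ) ^ (s-1) - (t:ℂ) ^ n * (t:ℂ) ^ (-s)) =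
      1 / ((n:ℂ) + s) - 1 / ((n:ℂ) + 1 - s) := by
    intro n
    have a := pv_term n (s-1) (by simp; linarith)
    have b := pv_term n (-s) (by simp; linarith)
    rw [intervalIntegral.integral_sub a.1 b.1, a.2, b.2]
    congr 2 <;> ring
  simp_rw [← e]
  rw [← intervalIntegral.integral_finsetSum]
  · apply intervalIntegral.integral_congr_Ioo_of_le zero_le_one
    intro t ht
    have h3 := pv_one_sub_ne ht.2.ne
    simp only [← mul_sub, ← Finset.sum_mul, pvG]
    rw [← mul_neg_geom_sum]
    field_simp
  · intro n _
    exact (pv_term n (s-1) (by simp; linarith)).1.sub (pv_term n (-s) (by simp; linarith)).1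

lemma pv_lim (s : ℂ) (hs0 : 0 < s.re) (hs1 : s.re < 1) :
    Tendsto (fun N : ℕ => ∫ t in (0:ℝ)..1, (1 - (t:ℂ) ^ N) * pvG s t) atTop
      (nhds (∫ t in (0:ℝ)..1, pvG s t)) := by
  have hG := pv_G_int s hs0 hs1
  apply intervalIntegral.tendsto_integral_filter_of_dominated_convergence (fun t => ‖pvG s t‖)
  · refine Eventually.of_forall fun N => ?_
    have : IntervalIntegrable (fun t : ℝ => (1 - (t:ℂ) ^ N) * pvG s t) volume 0 1 :=
      hG.continuousOn_mul (by fun_prop)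
    exact (intervalIntegrable_iff.mp this).aestronglyMeasurable
  · refine Eventually.of_forall fun N => Eventually.of_forall fun t ht => ?_
    rw [Set.uIoc_of_le zero_le_one] at ht
    rw [norm_mul]
    apply mul_le_of_le_one_left (norm_nonneg _)
    have : (1 - (t:ℂ) ^ N) = ((1 - t ^ N : ℝ) : ℂ) := by push_cast; rfl
    rw [this, Complex.norm_real, Real.norm_eq_abs, abs_le]
    have h1 := pow_le_one₀ (n := N) ht.1.le ht.2
    have h2 := pow_nonneg ht.1.le N
    constructor <;> linarith
  · exact hG.norm
  · filter_upwards [(volume : Measure ℝ).ae_ne 1] with t ht1 ht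
    rw [Set.uIoc_of_le zero_le_one] at ht
    have hlt : t < 1 := lt_of_le_of_ne ht.2 ht1
    have : Tendsto (fun N : ℕ => (t:ℂ) ^ N) atTop (nhds 0) := by
      apply tendsto_pow_atTop_nhds_zero_of_norm_lt_one
      rw [Complex.norm_real, Real.norm_eq_abs, abs_of_pos ht.1]; exact hlt
    simpa using ((tendsto_const_nhds (x := (1:ℂ))).sub this).mul_const (pvG s t)

lemma pv_sum_lim (s : ℂ) (hs0 : 0 < s.re) (hs1 : s.re < 1) :
    Tendsto (fun N : ℕ => ∑ n ∈ Finset.range N, (1 / ((n:ℂ) + s) - 1 / ((n:ℂ) + 1 - s))) atTop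
      (nhds ((Real.pi : ℂ) * Complex.cot ((Real.pi : ℂ) * s))) := by
  have hsZ : s ∈ Complex.integerComplement := by
    rw [Complex.mem_integerComplement_iff]
    rintro ⟨n, rfl⟩
    simp only [Complex.intCast_re] at hs0 hs1
    have : 0 < n := by exact_mod_cast hs0
    have : n < 1 := by exact_mod_cast hs1
    omega
  have h := tendsto_logDeriv_euler_cot_sub hsZ
  have key : ∀ N : ℕ, ∑ n ∈ Finset.range N, (1 / ((n:ℂ) + s) - 1 / ((n:ℂ) + 1 - s)) =
      ∑ j ∈ Finset.range N, cotTerm s j + 1 / s - 1 / ((N:ℂ) + s) := by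
    intro N
    induction N with
    | zero => simp
    | succ N ih =>
      rw [Finset.sum_range_succ, Finset.sum_range_succ, ih, cotTerm]
      have : s - ((N:ℂ) + 1) = -((N:ℂ) + 1 - s) := by ring
      rw [this, div_neg]
      push_cast
      rw [show s + ((N:ℂ) + 1) = (N:ℂ) + 1 + s by ring]
      ring
  have h0 : Tendsto (fun N : ℕ => 1 / ((N:ℂ) + s)) atTop (nhds 0) := by
    simp_rw [one_div]
    apply tendsto_inv₀_cobounded.comp
    exact (tendsto_add_const_cobounded s).comp (tendsto_norm_atTop_iff_cobounded.mp (by simpa using tendsto_natCast_atTop_atTop (R := ℝ)))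
  simp_rw [key]
  have := (h.add_const (1/s)).sub h0
  simpa using this

lemma pv_integral (s : ℂ) (hs0 : 0 < s.re) (hs1 : s.re < 1) :
    ∫ t in (0:ℝ)..1, pvG s t = (Real.pi : ℂ) * Complex.cot ((Real.pi : ℂ) * s) := by
  have h := pv_lim s hs0 hs1
  simp_rw [pv_partial s hs0 hs1] at h
  exact tendsto_nhds_unique h (pv_sum_lim s hs0 hs1)

lemma pv_subst (s : ℂ) (c : ℝ) (hc : 0 < c) (hc1 : c < 1) :
    ∫ t in Set.Ioi c⁻¹, (t:ℂ) ^ (s - 1) / (1 - (t:ℂ)) =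
      - ∫ t in (0:ℝ)..c, (t:ℂ) ^ (-s) / (1 - (t:ℂ)) := by
  rw [← Set.inv_Ioo_0_left hc, ← Set.image_inv_eq_inv,
    integral_image_eq_integral_abs_deriv_smul (f' := fun x => -(x^2)⁻¹) measurableSet_Ioo
      (fun x hx => (hasDerivAt_inv hx.1.ne').hasDerivWithinAt) inv_injective.injOn,
    intervalIntegral.integral_of_le hc.le, integral_Ioc_eq_integral_Ioo, ← integral_neg]
  apply setIntegral_congr_fun measurableSet_Ioo
  intro t ht
  have ht0 : (t:ℂ) ≠ 0 := by exact_mod_cast ht.1.ne'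
  have h3 := pv_one_sub_ne (ht.2.trans hc1).ne
  have h4 : ((t:ℂ) - 1) ≠ 0 := by rw [← neg_sub]; exact neg_ne_zero.mpr h3
  have e : ((t⁻¹ : ℝ) : ℂ) ^ (s - 1) = (t:ℂ) ^ (-s) * t := by
    rw [Complex.ofReal_inv, Complex.inv_cpow _ _ (by
      rw [Complex.arg_ofReal_of_nonneg ht.1.le]; exact Real.pi_pos.ne),
      ← Complex.cpow_neg, neg_sub, sub_eq_neg_add, Complex.cpow_add _ _ ht0, Complex.cpow_one]
  simp only [e, abs_neg, abs_inv, abs_pow, sq_abs, Complex.real_smul]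
  push_cast
  have h5 : 1 - (t:ℂ)⁻¹ = -(1 - (t:ℂ)) / t := by field_simp; ring
  rw [h5]
  field_simp

lemma pv_tail (s : ℂ) (hs1 : s.re < 1) (ε : ℝ) (h0 : 0 < ε) (h1 : ε < 1) :
    ‖∫ t in (1-ε)..(1+ε)⁻¹, (t:ℂ) ^ (-s) / (1 - (t:ℂ))‖ ≤ ε * (1-ε)⁻¹ := by
  have hp : (0:ℝ) < 1 + ε := by linarith
  have hq : (0:ℝ) < 1 - ε := by linarith
  have hd : (1+ε)⁻¹ - (1-ε) = ε * (ε * (1+ε)⁻¹) := by field_simp; ring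
  have hle : 1 - ε ≤ (1+ε)⁻¹ := by
    have : 0 ≤ ε * (ε * (1+ε)⁻¹) := by positivity
    linarith
  have hb : ∀ t ∈ Set.uIoc (1-ε) (1+ε)⁻¹, ‖(t:ℂ) ^ (-s) / (1 - (t:ℂ))‖ ≤
      (1-ε)⁻¹ / (ε * (1+ε)⁻¹) := by
    intro t ht
    rw [Set.uIoc_of_le hle] at ht
    have ht0 : 0 < t := hq.trans ht.1
    have he : 1 - (1+ε)⁻¹ = ε * (1+ε)⁻¹ := by field_simp; ring
    have hpos : 0 < ε * (1+ε)⁻¹ := by positivity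
    have ht1 : ε * (1+ε)⁻¹ ≤ 1 - t := by rw [← he]; linarith [ht.2]
    have hn : ‖1 - (t:ℂ)‖ = 1 - t := by
      rw [← Complex.ofReal_one, ← Complex.ofReal_sub, Complex.norm_real, Real.norm_eq_abs,
        abs_of_pos (by linarith)]
    rw [norm_div, hn, Complex.norm_cpow_eq_rpow_re_of_pos ht0]
    have : t ^ (-s).re ≤ (1-ε)⁻¹ := by
      calc t ^ (-s).re ≤ t ^ (-1:ℝ) := by
            apply Real.rpow_le_rpow_of_exponent_ge ht0 (by linarith)
            simp; linarith
        _ = t⁻¹ := Real.rpow_neg_one t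
        _ ≤ _ := inv_anti₀ hq ht.1.le
    gcongr
  refine (intervalIntegral.norm_integral_le_of_norm_le_const hb).trans (le_of_eq ?_)
  rw [hd, abs_of_pos (by positivity)]
  field_simp

theorem pv_mellin_of_hilbert_kernel (s : ℂ) (hs0 : 0 < s.re) (hs1 : s.re < 1) :
    Tendsto (fun ε : ℝ =>
        (∫ t in Set.Ioo (0:ℝ) (1 - ε), (t:ℂ) ^ (s - 1) / (1 - (t:ℂ)))
          + ∫ t in Set.Ioi (1 + ε), (t:ℂ) ^ (s - 1) / (1 - (t:ℂ)))
      (nhdsWithin 0 (Set.Ioi 0))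
      (nhds ((Real.pi : ℂ) * Complex.cot ((Real.pi : ℂ) * s))) := by
  have hev : ∀ᶠ ε : ℝ in nhdsWithin 0 (Set.Ioi 0), ε ∈ Set.Ioo (0:ℝ) 1 :=
    Ioo_mem_nhdsGT one_pos
  have hmain : Tendsto (fun ε : ℝ => (∫ t in (0:ℝ)..(1-ε), pvG s t)
      - ∫ t in (1-ε)..(1+ε)⁻¹, (t:ℂ) ^ (-s) / (1 - (t:ℂ))) (nhdsWithin 0 (Set.Ioi 0))
      (nhds ((Real.pi : ℂ) * Complex.cot ((Real.pi : ℂ) * s) - 0)) := by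
    apply Tendsto.sub
    · rw [← pv_integral s hs0 hs1]
      have hc := intervalIntegral.continuousOn_primitive_interval (μ := volume)
        (f := pvG s) (a := 0) (b := 1)
        (by
          have := pv_G_int s hs0 hs1
          rw [Set.uIcc_of_le zero_le_one]
          rwa [intervalIntegrable_iff_integrableOn_Icc_of_le zero_le_one] at this)
      have hc1 := hc 1 (by simp)
      refine hc1.tendsto.comp ?_
      apply tendsto_nhdsWithin_iff.mpr
      constructor
      · have : Tendsto (fun ε : ℝ => 1 - ε) (nhds 0) (nhds (1 - 0)) :=
          tendsto_const_nhds.sub tendsto_id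
        rw [sub_zero] at this
        exact this.mono_left nhdsWithin_le_nhds
      · filter_upwards [hev] with ε hε
        rw [Set.uIcc_of_le zero_le_one]
        exact ⟨by linarith [hε.2], by linarith [hε.1]⟩
    · apply squeeze_zero_norm' (a := fun ε : ℝ => ε * (1-ε)⁻¹)
      · filter_upwards [hev] with ε hε
        exact pv_tail s hs1 ε hε.1 hε.2
      · have : ContinuousAt (fun ε : ℝ => ε * (1-ε)⁻¹) 0 := by
          apply ContinuousAt.mul continuousAt_id
          apply ContinuousAt.inv₀ (by fun_prop) (by norm_num)
        have h := this.tendsto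
        simp only [zero_mul] at h
        exact h.mono_left nhdsWithin_le_nhds
  rw [sub_zero] at hmain
  refine hmain.congr' ?_
  filter_upwards [hev] with ε hε
  have h0 := hε.1
  have h1 := hε.2
  have hp : (0:ℝ) < (1 + ε)⁻¹ := by positivity
  have hp1 : (1 + ε)⁻¹ < 1 := inv_lt_one_of_one_lt₀ (by linarith)
  have hsub := pv_subst s (1+ε)⁻¹ hp hp1
  rw [inv_inv] at hsub
  have a := pv_int_cpow_div (s-1) (by simp; linarith) (1-ε) (by linarith) (by linarith)
  have b := pv_int_cpow_div (-s) (by simp; linarith) (1-ε) (by linarith) (by linarith)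
  have c := pv_int_cpow_div (-s) (by simp; linarith) (1+ε)⁻¹ hp.le hp1
  rw [hsub, ← integral_Ioc_eq_integral_Ioo, ← intervalIntegral.integral_of_le (by linarith),
    ← intervalIntegral.integral_interval_sub_left c b]
  have : ∫ t in (0:ℝ)..(1-ε), pvG s t = (∫ t in (0:ℝ)..(1-ε), (t:ℂ) ^ (s-1) / (1 - (t:ℂ)))
      - ∫ t in (0:ℝ)..(1-ε), (t:ℂ) ^ (-s) / (1 - (t:ℂ)) := by
    rw [← intervalIntegral.integral_sub a b]
    simp only [pvG, sub_div]
  rw [this]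
  ring
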